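/- arXiv:math/9509223 — 3 statements merged into one kernel-verified Lean document; each statement's English description precedes it below -/
import Mathlib

section
/- (q-binomial theorem for base |q| > 1) Let q, a, z be complex numbers with |q| > 1 and |az/q| < 1. Then ∑_{n=0}^∞ ((a;q)_n/(q;q)_n) z^n = (z/q; q^{-1})_∞ / (az/q; q^{-1})_∞. -/
/-- The finite q-shifted factorial `(a;q)_n = ∏_{k=0}^{n-1} (1 - a q^k)`. -/
noncomputable def qPoch (a q : ℂ) (n : ℕ) : ℂ := ∏ k ∈ Finset.range n, (1 - a * q ^ k)

/-- The infinite q-shifted factorial `(a;q)_∞ = ∏_{k=0}^∞ (1 - a q^k)`. -/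
noncomputable def qPochInf (a q : ℂ) : ℂ := ∏' k : ℕ, (1 - a * q ^ k)

theorem qb_aux (q a z : ℂ) (hq : 1 < ‖q‖) (n : ℕ) :
    qPoch a q (n+1) / qPoch q q (n+1) * z ^ (n+1) =
      (z * q⁻¹ * ((q⁻¹) ^ n - a) / ((q⁻¹)^(n+1) - 1)) * (qPoch a q n / qPoch q q n * z ^ n) := by
  have hq0 : q ≠ 0 := by rintro rfl; simp at hq; linarith
  have h1 : 1 - q * q ^ n ≠ 0 := by
    intro h
    have h2 : q ^ (n+1) = 1 := by rw [pow_succ']; linear_combination -h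
    have h3 := congrArg norm h2
    rw [norm_pow, norm_one] at h3
    exact absurd h3 (one_lt_pow₀ hq (by omega)).ne'
  have h2 : (z * q⁻¹ * ((q⁻¹) ^ n - a) / ((q⁻¹)^(n+1) - 1)) = z * (1 - a * q ^ n) / (1 - q * q ^ n) := by
    have e : (q⁻¹)^(n+1) - 1 = (1 - q * q^n) * (q⁻¹)^(n+1) := by
      have : q ^ (n+1) * (q⁻¹)^(n+1) = 1 := by rw [← mul_pow, mul_inv_cancel₀ hq0, one_pow]
      rw [← pow_succ']; linear_combination this
    have e2 : z * q⁻¹ * ((q⁻¹) ^ n - a) = z * (1 - a * q ^ n) * (q⁻¹)^(n+1) := by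
      have : q ^ n * (q⁻¹)^n = 1 := by rw [← mul_pow, mul_inv_cancel₀ hq0, one_pow]
      rw [pow_succ]; linear_combination z * q⁻¹ * a * this
    rw [e, e2, mul_div_mul_right _ _ (by positivity)]
  rw [h2]
  unfold qPoch
  rw [Finset.prod_range_succ, Finset.prod_range_succ, pow_succ]
  rw [mul_div_mul_comm]
  ring

theorem qb_summable (q a z : ℂ) (hq : 1 < ‖q‖) (h : ‖a * z / q‖ < 1) :
    Summable (fun n : ℕ => qPoch a q n / qPoch q q n * z ^ n) := by
  obtain ⟨r, hr, hr1⟩ := exists_between h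
  have hp : ‖q⁻¹‖ < 1 := by rw [norm_inv]; exact inv_lt_one_of_one_lt₀ hq
  have ht := tendsto_pow_atTop_nhds_zero_of_norm_lt_one hp
  have ht1 := (Filter.tendsto_add_atTop_iff_nat 1).2 ht
  have hl : Filter.Tendsto (fun n : ℕ => ‖z * q⁻¹ * ((q⁻¹) ^ n - a) / ((q⁻¹)^(n+1) - 1)‖)
      Filter.atTop (nhds ‖z * q⁻¹ * (0 - a) / (0 - 1)‖) :=
    (((ht.sub_const a).const_mul (z * q⁻¹)).div (ht1.sub_const 1) (by norm_num)).norm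
  have e : z * q⁻¹ * (0 - a) / (0 - 1) = a * z / q := by ring
  rw [e] at hl
  refine summable_of_ratio_norm_eventually_le hr1 ?_
  filter_upwards [hl.eventually (gt_mem_nhds hr)] with n hn
  rw [qb_aux q a z hq n, norm_mul]
  exact mul_le_mul_of_nonneg_right hn.le (norm_nonneg _)

theorem qb_step (q a z : ℂ) (hq : 1 < ‖q‖) (h : ‖a * z / q‖ < 1) (h' : ‖a * (z * q⁻¹) / q‖ < 1) :
    (1 - z / q) * ∑' n : ℕ, qPoch a q n / qPoch q q n * (z * q⁻¹) ^ n =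
    (1 - a * z / q) * ∑' n : ℕ, qPoch a q n / qPoch q q n * z ^ n := by
  have s1 := qb_summable q a z hq h
  have s2 := qb_summable q a (z * q⁻¹) hq h'
  have hp : ‖q⁻¹‖ < 1 := by rw [norm_inv]; exact inv_lt_one_of_one_lt₀ hq
  have H := (s2.sub s1).tsum_eq_zero_add
  rw [s2.tsum_sub s1] at H
  have e : ∀ n : ℕ, qPoch a q (n+1) / qPoch q q (n+1) * (z * q⁻¹) ^ (n+1) -
      qPoch a q (n+1) / qPoch q q (n+1) * z ^ (n+1) =
      z / q * (qPoch a q n / qPoch q q n * (z * q⁻¹) ^ n) -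
      a * z / q * (qPoch a q n / qPoch q q n * z ^ n) := by
    intro n
    have hne : (q⁻¹)^(n+1) - 1 ≠ 0 := by
      intro h0
      have h3 := congrArg norm (sub_eq_zero.1 h0)
      rw [norm_pow, norm_one] at h3
      exact absurd h3 (pow_lt_one₀ (norm_nonneg _) hp (by omega)).ne
    have := qb_aux q a z hq n
    rw [div_mul_eq_mul_div (z * q⁻¹ * ((q⁻¹) ^ n - a)), eq_div_iff hne] at this
    rw [mul_pow, mul_pow]
    linear_combination this
  simp only [e] at H
  rw [(s2.mul_left _).tsum_sub (s1.mul_left _), tsum_mul_left, tsum_mul_left] at H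
  simp only [pow_zero, sub_self, zero_add] at H
  linear_combination H

theorem qb_summ (q x : ℂ) (hq : 1 < ‖q‖) : Summable (fun k : ℕ => ‖-(x * q⁻¹ ^ k)‖) := by
  have hp : ‖q⁻¹‖ < 1 := by rw [norm_inv]; exact inv_lt_one_of_one_lt₀ hq
  simp only [norm_neg, norm_mul, norm_pow]
  exact (summable_geometric_of_lt_one (norm_nonneg _) hp).mul_left _

theorem qb_prod (q x : ℂ) (hq : 1 < ‖q‖) :
    Filter.Tendsto (fun n => qPoch x q⁻¹ n) Filter.atTop (nhds (qPochInf x q⁻¹)) := by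
  have := (multipliable_one_add_of_summable (qb_summ q x hq)).hasProd.tendsto_prod_nat
  simpa only [qPoch, qPochInf, sub_eq_add_neg] using this

/-- The q-binomial theorem for base `|q| > 1`: if `|az/q| < 1`, then
`∑_{n=0}^∞ ((a;q)_n/(q;q)_n) z^n = (z/q; q⁻¹)_∞ / (az/q; q⁻¹)_∞`. -/
theorem q_binomial_theorem_base_gt_one (q a z : ℂ) (hq : 1 < ‖q‖) (h : ‖a * z / q‖ < 1) :
    HasSum (fun n : ℕ => qPoch a q n / qPoch q q n * z ^ n)
      (qPochInf (z / q) q⁻¹ / qPochInf (a * z / q) q⁻¹) := by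
  have s1 := qb_summable q a z hq h
  have hp : ‖q⁻¹‖ < 1 := by rw [norm_inv]; exact inv_lt_one_of_one_lt₀ hq
  have hle : ∀ k : ℕ, ‖a * z / q * q⁻¹ ^ k‖ < 1 := fun k => by
    rw [norm_mul, norm_pow]
    exact (mul_le_of_le_one_right (norm_nonneg _) (pow_le_one₀ (norm_nonneg _) hp.le)).trans_lt h
  have hz : ∀ k : ℕ, a * (z * q⁻¹ ^ k) / q = a * z / q * q⁻¹ ^ k := fun k => by ring
  have hne : qPochInf (a * z / q) q⁻¹ ≠ 0 := by
    have := tprod_one_add_ne_zero_of_summable (f := fun k : ℕ => -(a * z / q * q⁻¹ ^ k))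
      (fun k h0 => by
        have h1 : a * z / q * q⁻¹ ^ k = 1 := by linear_combination -h0
        have := hle k
        rw [h1, norm_one] at this
        exact lt_irrefl _ this) (qb_summ q _ hq)
    simpa only [qPochInf, sub_eq_add_neg] using this
  have hit : ∀ N : ℕ, qPoch (z / q) q⁻¹ N *
      ∑' n : ℕ, qPoch a q n / qPoch q q n * (z * q⁻¹ ^ N) ^ n =
      qPoch (a * z / q) q⁻¹ N * ∑' n : ℕ, qPoch a q n / qPoch q q n * z ^ n := by
    intro N
    induction N with
    | zero => simp [qPoch]
    | succ N ih =>
      have hs := qb_step q a (z * q⁻¹ ^ N) hq (by rw [hz]; exact hle N)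
        (by rw [mul_assoc, ← pow_succ, hz]; exact hle _)
      rw [mul_assoc z, ← pow_succ, hz] at hs
      have e1 : ∀ x, qPoch x q⁻¹ (N+1) = qPoch x q⁻¹ N * (1 - x * q⁻¹ ^ N) :=
        fun x => Finset.prod_range_succ _ _
      rw [e1, e1]
      linear_combination qPoch (z / q) q⁻¹ N * hs + (1 - a * z / q * q⁻¹ ^ N) * ih
  have hlim : Filter.Tendsto (fun N : ℕ => ∑' n : ℕ, qPoch a q n / qPoch q q n * (z * q⁻¹ ^ N) ^ n)
      Filter.atTop (nhds (∑' n : ℕ, qPoch a q n / qPoch q q n * (0:ℂ) ^ n)) := by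
    refine tendsto_tsum_of_dominated_convergence s1.norm ?_ ?_
    · intro k
      have ht := (tendsto_pow_atTop_nhds_zero_of_norm_lt_one hp).const_mul z
      rw [mul_zero] at ht
      exact (ht.pow k).const_mul _
    · refine Filter.Eventually.of_forall fun N k => ?_
      rw [norm_mul, norm_mul, norm_pow, norm_pow, norm_mul, norm_pow]
      gcongr
      exact mul_le_of_le_one_right (norm_nonneg _) (pow_le_one₀ (norm_nonneg _) hp.le)
  have h0 : ∑' n : ℕ, qPoch a q n / qPoch q q n * (0:ℂ) ^ n = 1 := by
    rw [tsum_eq_single 0 (fun n hn => by simp [hn])]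
    simp [qPoch]
  rw [h0] at hlim
  have hA := (qb_prod q (z / q) hq).mul hlim
  have hB := (qb_prod q (a * z / q) hq).mul_const (∑' n : ℕ, qPoch a q n / qPoch q q n * z ^ n)
  have hE := tendsto_nhds_unique (hA.congr hit) hB
  have : qPochInf (z / q) q⁻¹ / qPochInf (a * z / q) q⁻¹ =
      ∑' n : ℕ, qPoch a q n / qPoch q q n * z ^ n := by
    rw [div_eq_iff hne]; linear_combination hE
  rw [this]
  exact s1.hasSum
end

section
/- (Quintuple product identity) For all complex numbers q and z with |q| < 1 and z ≠ 0, ∑_{n=-∞}^{∞} (-1)^n q^{n(3n-1)/2} z^{3n} (1 + z q^n) = (q;q)_∞ (-z;q)_∞ (-q/z;q)_∞ (qz²;q²)_∞ (q/z²;q²)_∞. -/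
open Filter Topology

noncomputable def qQ (q : ℂ) (n : ℕ) : ℂ := ∏ k ∈ Finset.range n, (1 - q ^ (k + 1))

noncomputable def qG (q : ℂ) : ℕ → ℕ → ℂ
  | _, 0 => 1
  | 0, _ + 1 => 0
  | n + 1, k + 1 => qG q n k + q ^ (k + 1) * qG q n (k + 1)

lemma qG_gt (q : ℂ) : ∀ n k : ℕ, n < k → qG q n k = 0 := by
  intro n
  induction n with
  | zero => intro k hk; cases k with
    | zero => omega
    | succ k => simp [qG]
  | succ n ih => intro k hk; cases k with
    | zero => omega
    | succ k => simp [qG, ih k (by omega), ih (k+1) (by omega)]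

lemma qG_zero (q : ℂ) (n : ℕ) : qG q n 0 = 1 := by cases n <;> simp [qG]

lemma qQ_succ (q : ℂ) (n : ℕ) : qQ q (n + 1) = qQ q n * (1 - q ^ (n + 1)) := by
  simp [qQ, Finset.prod_range_succ]

lemma qG_mul (q : ℂ) : ∀ n k m : ℕ, k + m = n → qG q n k * (qQ q k * qQ q m) = qQ q n := by
  intro n
  induction n with
  | zero =>
    intro k m h
    obtain ⟨rfl, rfl⟩ : k = 0 ∧ m = 0 := by omega
    simp [qG, qQ]
  | succ n ih =>
    intro k m h
    cases k with
    | zero =>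
      have : m = n + 1 := by omega
      subst this
      simp [qG, qQ]
    | succ k =>
      cases m with
      | zero =>
        have h1 := ih k 0 (by omega)
        have : k = n := by omega
        subst this
        rw [qG, qG_gt q k (k+1) (by omega), qQ_succ]
        linear_combination (1 - q ^ (k + 1)) * h1
      | succ m =>
        have h1 := ih k (m + 1) (by omega)
        have h2 := ih (k + 1) m (by omega)
        have h3 : n = k + m + 1 := by omega
        rw [qG, qQ_succ q n]
        rw [qQ_succ q k] at h2 ⊢
        rw [qQ_succ q m] at h1 ⊢
        subst h3
        linear_combination (1 - q ^ (k + 1)) * h1 + q ^ (k + 1) * (1 - q ^ (m + 1)) * h2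

/-- Gauss' q-binomial theorem. -/
lemma gauss (q : ℂ) : ∀ (N : ℕ) (x : ℂ), ∏ k ∈ Finset.range N, (1 + x * q ^ k) =
    ∑ j ∈ Finset.range (N + 1), qG q N j * q ^ (j.choose 2) * x ^ j := by
  intro N
  induction N with
  | zero => intro x; simp [qG]
  | succ N ih =>
    intro x
    rw [Finset.prod_range_succ']
    have : ∀ k ∈ Finset.range N, (1 + x * q ^ (k + 1)) = 1 + (x * q) * q ^ k := by
      intro k _; ring
    rw [Finset.prod_congr rfl this, ih, Finset.sum_range_succ' _ (N + 1)]
    simp only [qG]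
    have e : ∀ j ∈ Finset.range (N + 1),
        (qG q N j + q ^ (j + 1) * qG q N (j + 1)) * q ^ ((j + 1).choose 2) * x ^ (j + 1)
        = x * (qG q N j * q ^ (j.choose 2) * (x * q) ^ j)
          + qG q N (j + 1) * q ^ ((j + 1).choose 2) * (x * q) ^ (j + 1) := by
      intro j _
      have : (j + 1).choose 2 = j + j.choose 2 := by
        rw [Nat.choose_succ_succ' j 1]; simp
      rw [this]; ring
    rw [Finset.sum_congr rfl e, Finset.sum_add_distrib, ← Finset.mul_sum]
    have e2 := Finset.sum_range_succ' (fun j => qG q N j * q ^ (j.choose 2) * (x * q) ^ j) (N + 1)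
    rw [Finset.sum_range_succ, qG_gt q N (N+1) (by omega)] at e2
    simp only [qG_zero] at e2
    simp at e2 ⊢
    linear_combination e2

lemma two_e (j : ℤ) : 2 * (j * (j - 1) / 2) = j * (j - 1) :=
  Int.two_mul_ediv_two_of_even (Int.even_mul_pred_self j)

lemma two_e_nat (j : ℕ) : 2 * ((j.choose 2 : ℕ) : ℤ) = j * (j - 1) := by
  have := Nat.triangle_succ j
  induction j with
  | zero => simp
  | succ j ih =>
    have : (j + 1).choose 2 = j + j.choose 2 := by
      rw [Nat.choose_succ_succ' j 1]; simp
    have h := ih (Nat.triangle_succ j)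
    rw [this]; push_cast; linear_combination h

lemma prod_neg_part (q x : ℂ) (hq : q ≠ 0) (hx : x ≠ 0) (n : ℕ) :
    ∏ k ∈ Finset.range n, (1 + x * q ^ (-(n : ℤ)) * q ^ k) =
      x ^ n * q ^ (-(n * (n + 1) / 2 : ℤ)) * ∏ k ∈ Finset.range n, (1 + q / x * q ^ k) := by
  rw [← Finset.prod_range_reflect]
  induction n with
  | zero => simp
  | succ n ih =>
    rw [Finset.prod_range_succ, Finset.prod_range_succ (fun k => 1 + q / x * q ^ k)]
    have e1 : ∀ j ∈ Finset.range n, 1 + x * q ^ (-((n + 1 : ℕ) : ℤ)) * q ^ (n + 1 - 1 - j)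
        = 1 + x * q ^ (-(n : ℤ)) * q ^ (n - 1 - j) := by
      intro j hj
      have := Finset.mem_range.mp hj
      obtain ⟨m, rfl⟩ : ∃ m, n = j + 1 + m := ⟨n - (j + 1), by omega⟩
      have a1 : j + 1 + m + 1 - 1 - j = m + 1 := by omega
      have a2 : j + 1 + m - 1 - j = m := by omega
      rw [a1, a2]
      have : (-((j + 1 + m : ℕ) : ℤ)) = (-((j + 1 + m + 1 : ℕ) : ℤ)) + 1 := by push_cast; ring
      rw [this, zpow_add₀ hq]
      simp; ring
    rw [Finset.prod_congr rfl e1, ih]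
    have e2 : (-(((n + 1 : ℕ) : ℤ) * (((n + 1 : ℕ) : ℤ) + 1) / 2 : ℤ)) = -(n * (n + 1) / 2 : ℤ) + -((n + 1 : ℕ) : ℤ) := by
      have h1 := two_e (n + 1)
      have h2 := two_e (n + 2)
      have r1 : ((n:ℤ) + 1) * (n + 1 - 1) = n * (n + 1) := by ring
      have r2 : ((n:ℤ) + 2) * (n + 2 - 1) = (((n + 1 : ℕ) : ℤ) * (((n + 1 : ℕ) : ℤ) + 1)) := by push_cast; ring
      rw [r1] at h1
      rw [r2] at h2
      have : (((n + 1 : ℕ) : ℤ) * (((n + 1 : ℕ) : ℤ) + 1)) = n * (n + 1) + 2 * (n + 1) := by push_cast; ring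
      rw [this] at h2 ⊢
      push_cast
      omega
    rw [e2, zpow_add₀ hq]
    have e3 : n + 1 - 1 - n = 0 := by omega
    rw [e3, zpow_neg q ((n + 1 : ℕ) : ℤ), zpow_natCast]
    field_simp
    ring

lemma finite_jtp (q x : ℂ) (hq : q ≠ 0) (hx : x ≠ 0) (n : ℕ) :
    (∏ k ∈ Finset.range n, (1 + x * q ^ k)) * ∏ k ∈ Finset.range n, (1 + q / x * q ^ k) =
      ∑ j ∈ Finset.Icc (-(n : ℤ)) n,
        qG q (2 * n) (n + j).toNat * (q ^ (j * (j - 1) / 2) * x ^ j) := by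
  have h := gauss q (2 * n) (x * q ^ (-(n : ℤ)))
  rw [two_mul, Finset.prod_range_add, prod_neg_part q x hq hx] at h
  have e1 : ∀ k ∈ Finset.range n, 1 + x * q ^ (-(n : ℤ)) * q ^ (n + k) = 1 + x * q ^ k := by
    intro k _
    rw [pow_add, zpow_neg, zpow_natCast]; field_simp
  rw [Finset.prod_congr rfl e1] at h
  have hA : x ^ n * q ^ (-(n * (n + 1) / 2 : ℤ)) ≠ 0 :=
    mul_ne_zero (pow_ne_zero _ hx) (zpow_ne_zero _ hq)
  apply mul_left_cancel₀ hA
  have e2 : ∑ j ∈ Finset.Icc (-(n : ℤ)) n,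
        qG q (2 * n) (n + j).toNat * (q ^ (j * (j - 1) / 2) * x ^ j) =
      ∑ i ∈ Finset.range (n + n + 1),
        qG q (2 * n) i * (q ^ ((i - n : ℤ) * ((i - n : ℤ) - 1) / 2) * x ^ (i - n : ℤ)) := by
    symm
    refine Finset.sum_bij (fun i _ => (i : ℤ) - n) ?_ ?_ ?_ ?_
    · intro i hi; simp at hi ⊢; omega
    · intro i _ j _ h; simpa using h
    · intro j hj
      simp at hj
      exact ⟨(n + j).toNat, by simp; omega, by simp; omega⟩
    · intro i hi
      have : ((n : ℤ) + (i - n)).toNat = i := by simp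
      rw [this]
  rw [e2, Finset.mul_sum]
  calc _ = _ := by rw [← mul_assoc, mul_right_comm]
    _ = _ := h
    _ = _ := by
      apply Finset.sum_congr rfl
      intro i _
      rw [← two_mul]
      have hx2 : x ^ (i - n : ℤ) = x ^ i / x ^ n := by rw [zpow_sub₀ hx]; simp
      rw [hx2, mul_pow, ← zpow_natCast (q ^ (-(n:ℤ))) i, ← zpow_mul, ← zpow_natCast q (i.choose 2)]
      have e3 : ((i - n : ℤ) * ((i - n : ℤ) - 1) / 2) = ((i.choose 2 : ℕ) : ℤ) + (-(n:ℤ) * i) + (n * (n + 1) / 2 : ℤ) := by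
        have h1 := two_e (i - n)
        have h2 := two_e_nat i
        have h3 := two_e (n + 1)
        have r1 : ((n:ℤ) + 1) * (n + 1 - 1) = n * (n + 1) := by ring
        rw [r1] at h3
        have : 2 * ((i - n : ℤ) * ((i - n : ℤ) - 1) / 2) = 2 * (((i.choose 2 : ℕ) : ℤ) + (-(n:ℤ) * i) + (n * (n + 1) / 2 : ℤ)) := by
          linear_combination h1 - h2 - h3
        omega
      rw [e3, zpow_add₀ hq, zpow_add₀ hq, zpow_neg q (n * (n + 1) / 2 : ℤ)]
      have : q ^ (n * (n + 1) / 2 : ℤ) ≠ 0 := zpow_ne_zero _ hq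
      field_simp

lemma summable_nat_theta (q a : ℂ) (hq0 : q ≠ 0) (hq : ‖q‖ < 1) (ha : a ≠ 0) :
    Summable (fun n : ℕ => q ^ (n.choose 2) * a ^ n) := by
  refine summable_of_ratio_test_tendsto_lt_one (l := 0) one_pos ?_ ?_
  · exact Eventually.of_forall fun n => mul_ne_zero (pow_ne_zero _ hq0) (pow_ne_zero _ ha)
  · have h1 : Tendsto (fun n : ℕ => ‖q‖ ^ n * ‖a‖) atTop (𝓝 0) := by
      simpa using (tendsto_pow_atTop_nhds_zero_of_lt_one (norm_nonneg q) hq).mul_const ‖a‖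
    refine h1.congr fun n => ?_
    have : (n + 1).choose 2 = n + n.choose 2 := by
      rw [Nat.choose_succ_succ' n 1]; simp
    rw [this]
    have h1 : ‖q‖ ≠ 0 := by simpa using hq0
    have h2 : ‖a‖ ≠ 0 := by simpa using ha
    simp only [norm_mul, norm_pow]
    field_simp
    ring

lemma summable_theta (q x : ℂ) (hq0 : q ≠ 0) (hq : ‖q‖ < 1) (hx : x ≠ 0) :
    Summable (fun j : ℤ => q ^ (j * (j - 1) / 2) * x ^ j) := by
  apply Summable.of_nat_of_neg_add_one
  · refine (summable_nat_theta q x hq0 hq hx).congr fun n => ?_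
    have : ((n:ℤ) * (n - 1) / 2) = (n.choose 2 : ℕ) := by
      have := two_e n
      have := two_e_nat n
      omega
    rw [this]; simp
  · have h := ((summable_nat_add_iff 2).mpr
      (summable_nat_theta q x⁻¹ hq0 hq (inv_ne_zero hx))).mul_right x
    refine h.congr fun n => ?_
    have : ((-((n:ℤ) + 1)) * (-((n:ℤ) + 1) - 1) / 2) = ((n + 2).choose 2 : ℕ) := by
      have h1 := two_e (-((n:ℤ) + 1))
      have h2 := two_e_nat (n + 2)
      push_cast at h2
      have : ((-((n:ℤ) + 1)) * (-((n:ℤ) + 1) - 1)) = (n + 2) * (n + 2 - 1) := by ring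
      rw [this] at h1 ⊢
      omega
    rw [this, zpow_natCast, zpow_neg, ← Nat.cast_succ, zpow_natCast]
    rw [Nat.succ_eq_add_one, inv_pow]
    field_simp
    ring

lemma multipliable_poch (a q : ℂ) (hq : ‖q‖ < 1) :
    Multipliable (fun k : ℕ => 1 - a * q ^ k) := by
  have := multipliable_one_add_of_summable (f := fun k : ℕ => -(a * q ^ k)) (by
    simpa using (summable_geometric_of_lt_one (norm_nonneg _) hq).mul_left ‖a‖)
  simpa [sub_eq_add_neg] using this

lemma tendsto_poch (a q : ℂ) (hq : ‖q‖ < 1) :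
    Tendsto (fun n : ℕ => ∏ k ∈ Finset.range n, (1 - a * q ^ k)) atTop (𝓝 (qPochInf a q)) :=
  (multipliable_poch a q hq).tendsto_prod_tprod_nat

lemma one_sub_pow_ne (q : ℂ) (hq : ‖q‖ < 1) (k : ℕ) : 1 - q ^ (k + 1) ≠ 0 := by
  intro h
  have h1 : ‖q ^ (k + 1)‖ = 1 := by rw [← sub_eq_zero.mp h]; simp
  rw [norm_pow] at h1
  have := pow_lt_one₀ (norm_nonneg q) hq (Nat.succ_ne_zero k)
  exact absurd h1 this.ne

lemma qPochInf_self_ne (q : ℂ) (hq : ‖q‖ < 1) : qPochInf q q ≠ 0 := by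
  have := tprod_one_add_ne_zero_of_summable (f := fun k : ℕ => -(q * q ^ k)) (by
    intro k
    have := one_sub_pow_ne q hq k
    rw [pow_succ'] at this
    simpa [sub_eq_add_neg] using this) (by
    simpa using (summable_geometric_of_lt_one (norm_nonneg _) hq).mul_left ‖q‖)
  simpa [qPochInf, sub_eq_add_neg] using this

lemma qQ_ne (q : ℂ) (hq : ‖q‖ < 1) (n : ℕ) : qQ q n ≠ 0 :=
  Finset.prod_ne_zero_iff.mpr fun k _ => one_sub_pow_ne q hq k

lemma tendsto_qQ (q : ℂ) (hq : ‖q‖ < 1) : Tendsto (qQ q) atTop (𝓝 (qPochInf q q)) := by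
  refine (tendsto_poch q q hq).congr fun n => ?_
  simp only [qQ, pow_succ']

lemma qG_eq (q : ℂ) (hq : ‖q‖ < 1) (n k : ℕ) (h : k ≤ n) :
    qG q n k = qQ q n * ((qQ q k)⁻¹ * (qQ q (n - k))⁻¹) := by
  rw [← qG_mul q n k (n - k) (by omega)]
  have := qQ_ne q hq k
  have := qQ_ne q hq (n - k)
  field_simp

lemma qG_bound (q : ℂ) (hq : ‖q‖ < 1) : ∃ C : ℝ, ∀ n k : ℕ, ‖qG q n k‖ ≤ C := by
  obtain ⟨A, hA⟩ := (Metric.isBounded_range_of_tendsto _ (tendsto_qQ q hq)).exists_norm_le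
  obtain ⟨B, hB⟩ := (Metric.isBounded_range_of_tendsto _
    ((tendsto_qQ q hq).inv₀ (qPochInf_self_ne q hq))).exists_norm_le
  have hA' : ∀ n, ‖qQ q n‖ ≤ A := fun n => hA _ ⟨n, rfl⟩
  have hB' : ∀ n, ‖(qQ q n)⁻¹‖ ≤ B := fun n => hB _ ⟨n, rfl⟩
  have hA0 : 0 ≤ A := (norm_nonneg _).trans (hA' 0)
  have hB0 : 0 ≤ B := (norm_nonneg _).trans (hB' 0)
  refine ⟨A * (B * B), fun n k => ?_⟩
  by_cases h : k ≤ n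
  · rw [qG_eq q hq n k h, norm_mul, norm_mul]
    gcongr
    · exact hA' _
    · exact hB' _
    · exact hB' _
  · rw [qG_gt q n k (by omega)]
    simp; positivity

lemma qG_tendsto (q : ℂ) (hq : ‖q‖ < 1) (j : ℤ) :
    Tendsto (fun n : ℕ => qG q (2 * n) (n + j).toNat) atTop (𝓝 (qPochInf q q)⁻¹) := by
  have hP := qPochInf_self_ne q hq
  have t := tendsto_qQ q hq
  have t1 : Tendsto (fun n : ℕ => 2 * n) atTop atTop :=
    tendsto_atTop_mono (fun n => by simp only [id]; omega) tendsto_id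
  have t2 : Tendsto (fun n : ℕ => ((n:ℤ) + j).toNat) atTop atTop := by
    refine tendsto_atTop.mpr fun b => ?_
    filter_upwards [eventually_ge_atTop (b + j.natAbs)] with n hn
    omega
  have t3 : Tendsto (fun n : ℕ => 2 * n - ((n:ℤ) + j).toNat) atTop atTop := by
    refine tendsto_atTop.mpr fun b => ?_
    filter_upwards [eventually_ge_atTop (b + j.natAbs)] with n hn
    omega
  have := (t.comp t1).mul (((t.comp t2).inv₀ hP).mul ((t.comp t3).inv₀ hP))
  have e : qPochInf q q * ((qPochInf q q)⁻¹ * (qPochInf q q)⁻¹) = (qPochInf q q)⁻¹ := by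
    field_simp
  rw [e] at this
  refine this.congr' ?_
  filter_upwards [eventually_ge_atTop j.natAbs] with n hn
  rw [qG_eq q hq _ _ (by omega)]
  rfl

/-- Jacobi triple product. -/
lemma jtp (q x : ℂ) (hq0 : q ≠ 0) (hq : ‖q‖ < 1) (hx : x ≠ 0) :
    HasSum (fun j : ℤ => q ^ (j * (j - 1) / 2) * x ^ j)
      (qPochInf q q * qPochInf (-x) q * qPochInf (-(q / x)) q) := by
  have hs := summable_theta q x hq0 hq hx
  obtain ⟨C, hC⟩ := qG_bound q hq
  have hC0 : 0 ≤ C := (norm_nonneg _).trans (hC 0 0)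
  have hP := qPochInf_self_ne q hq
  have T1 : Tendsto (fun n : ℕ => ∑' j : ℤ, (if j ∈ Finset.Icc (-(n : ℤ)) n then
      qG q (2 * n) (n + j).toNat * (q ^ (j * (j - 1) / 2) * x ^ j) else 0)) atTop
      (𝓝 (∑' j : ℤ, (qPochInf q q)⁻¹ * (q ^ (j * (j - 1) / 2) * x ^ j))) := by
    refine tendsto_tsum_of_dominated_convergence
      (bound := fun j : ℤ => C * ‖q ^ (j * (j - 1) / 2) * x ^ j‖) (hs.norm.mul_left C) ?_ ?_
    · intro j
      refine ((qG_tendsto q hq j).mul_const _).congr' ?_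
      filter_upwards [eventually_ge_atTop j.natAbs] with n hn
      rw [if_pos]
      simp; omega
    · refine Eventually.of_forall fun n j => ?_
      split_ifs
      · rw [norm_mul]; gcongr; exact hC _ _
      · simp only [norm_zero]; positivity
  have T2 : Tendsto (fun n : ℕ => ∑' j : ℤ, (if j ∈ Finset.Icc (-(n : ℤ)) n then
      qG q (2 * n) (n + j).toNat * (q ^ (j * (j - 1) / 2) * x ^ j) else 0)) atTop
      (𝓝 (qPochInf (-x) q * qPochInf (-(q / x)) q)) := by
    refine ((tendsto_poch (-x) q hq).mul (tendsto_poch (-(q / x)) q hq)).congr fun n => ?_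
    rw [tsum_eq_sum (s := Finset.Icc (-(n : ℤ)) n) (fun j hj => if_neg hj)]
    rw [Finset.sum_congr rfl (fun j hj => if_pos hj), ← finite_jtp q x hq0 hx n]
    simp [sub_neg_eq_add]
  have e := tendsto_nhds_unique T1 T2
  rw [tsum_mul_left] at e
  convert hs.hasSum using 1
  rw [mul_assoc, ← e]
  field_simp

lemma poch_three (q : ℂ) (hq : ‖q‖ < 1) :
    qPochInf (q ^ 3) (q ^ 3) * qPochInf q (q ^ 3) * qPochInf (q ^ 2) (q ^ 3) = qPochInf q q := by
  have h3 : ‖q ^ 3‖ < 1 := by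
    rw [norm_pow]; exact pow_lt_one₀ (norm_nonneg _) hq (by norm_num)
  have T := ((tendsto_poch (q ^ 3) _ h3).mul (tendsto_poch q _ h3)).mul (tendsto_poch (q ^ 2) _ h3)
  have t1 : Tendsto (fun n : ℕ => 3 * n) atTop atTop :=
    tendsto_atTop_mono (fun n => by simp only [id]; omega) tendsto_id
  refine tendsto_nhds_unique T (((tendsto_poch q q hq).comp t1).congr fun n => ?_)
  induction n with
  | zero => simp
  | succ n ih =>
    simp only [Function.comp_apply] at ih ⊢
    rw [show 3 * (n + 1) = 3 * n + 1 + 1 + 1 by ring]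
    simp only [Finset.prod_range_succ]
    rw [ih]
    ring

lemma neg_one_zpow_neg (l : ℤ) : (-1 : ℂ) ^ (-l) = (-1) ^ l := by
  rw [zpow_neg, ← inv_zpow]; norm_num

lemma pent1 (q : ℂ) (hq0 : q ≠ 0) (hq : ‖q‖ < 1) :
    HasSum (fun l : ℤ => (-1 : ℂ) ^ l * q ^ (3 * l ^ 2 - l)) (qPochInf (q ^ 2) (q ^ 2)) := by
  have h2 : ‖q ^ 2‖ < 1 := by
    rw [norm_pow]; exact pow_lt_one₀ (norm_nonneg _) hq (by norm_num)
  have h6 : ‖q ^ 6‖ < 1 := by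
    rw [norm_pow]; exact pow_lt_one₀ (norm_nonneg _) hq (by norm_num)
  have h := jtp (q ^ 6) (-q ^ 2) (pow_ne_zero _ hq0) h6 (by simpa using hq0)
  have e := poch_three (q ^ 2) h2
  have e1 : -(q ^ 6 / -q ^ 2) = q ^ 4 := by field_simp
  rw [e1, neg_neg] at h
  simp only [← pow_mul] at e
  norm_num at e
  rw [e] at h
  convert h using 2 with l
  have h1 := two_e l
  have e2 : (3 * l ^ 2 - l : ℤ) = 6 * (l * (l - 1) / 2) + 2 * l := by linear_combination (-3) * h1
  rw [e2, zpow_add₀ hq0, zpow_mul, zpow_mul, neg_eq_neg_one_mul (q ^ 2), mul_zpow]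
  norm_cast
  ring

lemma pent2 (q : ℂ) (hq0 : q ≠ 0) (hq : ‖q‖ < 1) :
    HasSum (fun l : ℤ => (-1 : ℂ) ^ l * q ^ (3 * l ^ 2 + l)) (qPochInf (q ^ 2) (q ^ 2)) := by
  have h := (Equiv.neg ℤ).hasSum_iff.mpr (pent1 q hq0 hq)
  convert h using 2 with l
  simp only [Function.comp, Equiv.neg_apply, neg_one_zpow_neg]
  simp

lemma aux_eF (q z : ℂ) (hq0 : q ≠ 0) (hz : z ≠ 0) : ∀ N j : ℤ, q ^ ((N - 2 * j) * (N - 2 * j - 1) / 2) * z ^ (N - 2 * j) *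
    ((q ^ 2) ^ (j * (j - 1) / 2) * (-(q * z ^ 2)) ^ j) =
    (-1) ^ j * q ^ ((N - 2 * j) * (N - 2 * j - 1) / 2 + j ^ 2) * z ^ N := by
  intro N j
  have h1 := two_e j
  have e2 : j ^ 2 = 2 * (j * (j - 1) / 2) + j := by linear_combination (-1) * h1
  rw [e2, zpow_add₀ hq0, zpow_add₀ hq0, zpow_mul q 2, zpow_sub₀ hz, zpow_mul z 2,
    neg_eq_neg_one_mul (q * z ^ 2), mul_zpow, mul_zpow]
  have : (z ^ 2) ^ j ≠ 0 := zpow_ne_zero _ (pow_ne_zero _ hz)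
  norm_cast
  field_simp

lemma aux_E : ∀ N m l k : ℤ, 2 * k = (N - 2 * (l + m)) * (N - 2 * (l + m) - 1) + 2 * (l + m) ^ 2 →
    (N - 2 * (l + m)) * (N - 2 * (l + m) - 1) / 2 + (l + m) ^ 2 = k := by
  intro N m l k h
  have h1 := two_e (N - 2 * (l + m))
  have : 2 * ((N - 2 * (l + m)) * (N - 2 * (l + m) - 1) / 2 + (l + m) ^ 2) = 2 * k := by
    linear_combination h1 - h
  omega

lemma aux_pe : ∀ m : ℤ, 2 * (m * (3 * m - 1) / 2) = m * (3 * m - 1) := by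
  intro m
  apply Int.two_mul_ediv_two_of_even
  rcases Int.even_or_odd' m with ⟨k, rfl | rfl⟩
  · exact ⟨k * (3 * (2 * k) - 1), by ring⟩
  · exact ⟨(2 * k + 1) * (3 * k + 1), by ring⟩

lemma aux_c0 (q z : ℂ) (hq0 : q ≠ 0) (hq : ‖q‖ < 1) : ∀ m : ℤ, ∑' j : ℤ, ((-1 : ℂ) ^ j *
    q ^ ((3 * m - 2 * j) * (3 * m - 2 * j - 1) / 2 + j ^ 2) * z ^ (3 * m)) =
    (-1) ^ m * q ^ (m * (3 * m - 1) / 2) * z ^ (3 * m) * qPochInf (q ^ 2) (q ^ 2) := by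
  intro m
  have hn1 : (-1 : ℂ) ≠ 0 := by norm_num
  refine HasSum.tsum_eq ?_
  rw [← (Equiv.addRight m).hasSum_iff]
  convert (pent2 q hq0 hq).mul_left ((-1) ^ m * q ^ (m * (3 * m - 1) / 2) * z ^ (3 * m))
    using 2 with l
  · rfl
  simp only [Function.comp, Equiv.coe_addRight]
  rw [aux_E (3 * m) m l (m * (3 * m - 1) / 2 + (3 * l ^ 2 + l)) (by linear_combination aux_pe m),
    zpow_add₀ hq0, zpow_add₀ hn1]
  ring

lemma aux_c1 (q z : ℂ) (hq0 : q ≠ 0) (hq : ‖q‖ < 1) : ∀ m : ℤ, ∑' j : ℤ, ((-1 : ℂ) ^ j *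
    q ^ ((3 * m + 1 - 2 * j) * (3 * m + 1 - 2 * j - 1) / 2 + j ^ 2) * z ^ (3 * m + 1)) =
    (-1) ^ m * q ^ (m * (3 * m - 1) / 2 + m) * z ^ (3 * m + 1) * qPochInf (q ^ 2) (q ^ 2) := by
  intro m
  have hn1 : (-1 : ℂ) ≠ 0 := by norm_num
  refine HasSum.tsum_eq ?_
  rw [← (Equiv.addRight m).hasSum_iff]
  convert (pent1 q hq0 hq).mul_left ((-1) ^ m * q ^ (m * (3 * m - 1) / 2 + m) * z ^ (3 * m + 1))
    using 2 with l
  · rfl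
  simp only [Function.comp, Equiv.coe_addRight]
  rw [aux_E (3 * m + 1) m l (m * (3 * m - 1) / 2 + m + (3 * l ^ 2 - l)) (by linear_combination aux_pe m),
    zpow_add₀ hq0 (_ + m), zpow_add₀ hn1]
  ring

lemma aux_c2 (q z : ℂ) : ∀ m : ℤ, ∑' j : ℤ, ((-1 : ℂ) ^ j *
    q ^ ((3 * m + 2 - 2 * j) * (3 * m + 2 - 2 * j - 1) / 2 + j ^ 2) * z ^ (3 * m + 2)) = 0 := by
  intro m
  have hn1 : (-1 : ℂ) ≠ 0 := by norm_num
  have a1 := (Equiv.subLeft (2 * m + 1)).tsum_eq (fun j : ℤ => ((-1 : ℂ) ^ j *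
    q ^ ((3 * m + 2 - 2 * j) * (3 * m + 2 - 2 * j - 1) / 2 + j ^ 2) * z ^ (3 * m + 2)))
  have a2 : ∀ j : ℤ, ((-1 : ℂ) ^ (2 * m + 1 - j) *
    q ^ ((3 * m + 2 - 2 * (2 * m + 1 - j)) * (3 * m + 2 - 2 * (2 * m + 1 - j) - 1) / 2 +
      (2 * m + 1 - j) ^ 2) * z ^ (3 * m + 2)) = -((-1 : ℂ) ^ j *
    q ^ ((3 * m + 2 - 2 * j) * (3 * m + 2 - 2 * j - 1) / 2 + j ^ 2) * z ^ (3 * m + 2)) := by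
    intro j
    have s1 : (-1 : ℂ) ^ (2 * m + 1 - j) = -(-1) ^ j := by
      rw [sub_eq_add_neg, zpow_add₀ hn1, neg_one_zpow_neg, zpow_add₀ hn1, zpow_mul]
      norm_num
    have s2 := aux_E (3 * m + 2) 0 (2 * m + 1 - j)
      ((3 * m + 2 - 2 * j) * (3 * m + 2 - 2 * j - 1) / 2 + j ^ 2)
      (by linear_combination two_e (3 * m + 2 - 2 * j))
    simp only [add_zero] at s2
    rw [s1, s2]
    ring
  simp only [Equiv.subLeft_apply, a2] at a1
  rw [tsum_neg] at a1
  linear_combination (-1 / 2 : ℂ) * a1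

lemma split_three (c : ℤ → ℂ) (S : ℂ) (h : HasSum c S) :
    HasSum (fun m : ℤ => c (3 * m) + c (3 * m + 1) + c (3 * m + 2)) S := by
  have h3 := ((Int.divModEquiv 3).symm.hasSum_iff.mpr h).prod_fiberwise
    (fun m => hasSum_fintype _)
  convert h3 using 2 with m
  rw [Fin.sum_univ_three]
  simp only [Function.comp, Int.divModEquiv_symm_apply]
  have r0 : m * ((3 : ℕ) : ℤ) + (((0 : Fin 3) : ℕ) : ℤ) = 3 * m := by
    simp; ring
  have r1 : m * ((3 : ℕ) : ℤ) + (((1 : Fin 3) : ℕ) : ℤ) = 3 * m + 1 := by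
    simp; ring
  have r2 : m * ((3 : ℕ) : ℤ) + (((2 : Fin 3) : ℕ) : ℤ) = 3 * m + 2 := by
    simp; ring
  rw [r0, r1, r2]

def shear : ℤ × ℤ ≃ ℤ × ℤ where
  toFun := fun p => (p.1 - 2 * p.2, p.2)
  invFun := fun p => (p.1 + 2 * p.2, p.2)
  left_inv := fun p => by ext <;> simp
  right_inv := fun p => by ext <;> simp

lemma fiber_sum (f g : ℤ → ℂ) (S T : ℂ) (hf : HasSum f S) (hg : HasSum g T) :
    HasSum (fun N : ℤ => ∑' j : ℤ, f (N - 2 * j) * g j) (S * T) := by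
  have h := hf.mul hg (summable_mul_of_summable_norm hf.summable.norm hg.summable.norm)
  have hF := shear.hasSum_iff.mpr h
  exact hF.prod_fiberwise (fun N => (hF.summable.prod_factor N).hasSum)

lemma main_ne (q z : ℂ) (hq0 : q ≠ 0) (hq : ‖q‖ < 1) (hz : z ≠ 0) :
    HasSum (fun n : ℤ => (-1 : ℂ) ^ n * q ^ (n * (3 * n - 1) / 2) * z ^ (3 * n) * (1 + z * q ^ n))
      (qPochInf q q * qPochInf (-z) q * qPochInf (-(q / z)) q *
          qPochInf (q * z ^ 2) (q ^ 2) * qPochInf (q / z ^ 2) (q ^ 2)) := by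
  have h2 : ‖q ^ 2‖ < 1 := by
    rw [norm_pow]; exact pow_lt_one₀ (norm_nonneg _) hq (by norm_num)
  have hP := qPochInf_self_ne (q ^ 2) h2
  have hA := jtp q z hq0 hq hz
  have hB := jtp (q ^ 2) (-(q * z ^ 2)) (pow_ne_zero _ hq0) h2 (by simp [hq0, hz])
  have e1 : -(q ^ 2 / -(q * z ^ 2)) = q / z ^ 2 := by field_simp
  rw [e1, neg_neg] at hB
  have hc := fiber_sum _ _ _ _ hA hB
  simp only [aux_eF q z hq0 hz] at hc
  have hc3 := split_three _ _ hc
  simp only [aux_c0 q z hq0 hq, aux_c1 q z hq0 hq, aux_c2 q z] at hc3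
  rw [← hasSum_mul_right_iff hP]
  have eR : ∀ a b c d e f : ℂ, a * b * c * (d * e * f) = a * b * c * e * f * d := by
    intros; ring
  rw [eR] at hc3
  have ef : (fun m : ℤ => (-1 : ℂ) ^ m * q ^ (m * (3 * m - 1) / 2) * z ^ (3 * m) *
      qPochInf (q ^ 2) (q ^ 2) + (-1) ^ m * q ^ (m * (3 * m - 1) / 2 + m) * z ^ (3 * m + 1) *
      qPochInf (q ^ 2) (q ^ 2) + 0) = fun n : ℤ => (-1 : ℂ) ^ n * q ^ (n * (3 * n - 1) / 2) *
        z ^ (3 * n) * (1 + z * q ^ n) * qPochInf (q ^ 2) (q ^ 2) := by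
    funext m
    rw [zpow_add₀ hq0, zpow_add₀ hz, zpow_one]
    ring
  rw [ef] at hc3
  exact hc3

lemma split_int (f : ℤ → ℂ) (R : ℂ) (h : HasSum f R) :
    ∃ S₁ S₂ : ℂ, HasSum (fun n : ℕ => f n) S₁ ∧ HasSum (fun n : ℕ => f (-(n + 1) : ℤ)) S₂ ∧
      S₁ + S₂ = R := by
  have s1 := h.summable.comp_injective (i := fun n : ℕ => (n : ℤ)) Nat.cast_injective
  have s2 := h.summable.comp_injective (i := fun n : ℕ => (-(n + 1) : ℤ))
    (fun a b hab => by simp only at hab; omega)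
  refine ⟨_, _, s1.hasSum, s2.hasSum, ?_⟩
  exact (HasSum.of_nat_of_neg_add_one s1.hasSum s2.hasSum).unique h

theorem quintuple_product (q z : ℂ) (hq : ‖q‖ < 1) (hz : z ≠ 0) :
    ∃ S₁ S₂ : ℂ,
      HasSum (fun n : ℕ =>
        (-1 : ℂ) ^ (n : ℤ) * q ^ ((n : ℤ) * (3 * (n : ℤ) - 1) / 2) *
          z ^ (3 * (n : ℤ)) * (1 + z * q ^ (n : ℤ))) S₁ ∧
      HasSum (fun n : ℕ =>
        (-1 : ℂ) ^ (-(n + 1) : ℤ) * q ^ ((-(n + 1) : ℤ) * (3 * (-(n + 1) : ℤ) - 1) / 2) *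
          z ^ (3 * (-(n + 1) : ℤ)) * (1 + z * q ^ (-(n + 1) : ℤ))) S₂ ∧
      S₁ + S₂ =
        qPochInf q q * qPochInf (-z) q * qPochInf (-(q / z)) q *
          qPochInf (q * z ^ 2) (q ^ 2) * qPochInf (q / z ^ 2) (q ^ 2) := by
  by_cases hq0 : q = 0
  · subst hq0
    have p0 : ∀ w : ℂ, qPochInf 0 w = 1 := by intro w; simp [qPochInf]
    have p1 : qPochInf (-z) 0 = 1 + z := by
      rw [qPochInf, tprod_eq_mulSingle 0]
      · simp
      · intro k hk; simp [hk]
    refine ⟨1 + z, 0, ?_, ?_, ?_⟩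
    · convert hasSum_single (0 : ℕ) ?_ using 1
      · simp
      · intro n hn
        have : (n : ℤ) * (3 * n - 1) / 2 ≠ 0 := by
          have h1 : (1 : ℤ) ≤ n := by omega
          have : (n : ℤ) * (3 * n - 1) ≥ 2 := by nlinarith
          omega
        rw [zero_zpow _ this]; simp
    · convert hasSum_zero using 2 with n
      have : (-(n + 1) : ℤ) * (3 * (-(n + 1) : ℤ) - 1) / 2 ≠ 0 := by
        have : (-(n + 1) : ℤ) * (3 * (-(n + 1) : ℤ) - 1) ≥ 2 := by nlinarith
        omega
      rw [zero_zpow _ this]; simp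
    · simp [p0, p1]
  · have h := main_ne q z hq0 hq hz
    generalize (qPochInf q q * qPochInf (-z) q * qPochInf (-(q / z)) q *
          qPochInf (q * z ^ 2) (q ^ 2) * qPochInf (q / z ^ 2) (q ^ 2)) = R at h ⊢
    exact split_int _ R h
end

section
/- (Bailey–Daum q-Kummer summation) Let q, a, b be complex numbers with |q| < 1, |q/b| < 1, b ≠ 0, and all denominator factors nonzero. Then ∑_{n=0}^∞ ((a;q)_n (b;q)_n / ((q;q)_n (aq/b;q)_n)) (-q/b)^n = (-q;q)_∞ (aq;q²)_∞ (aq²/b²;q²)_∞ / ((aq/b;q)_∞ (-q/b;q)_∞). -/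
open Filter Topology

lemma qPoch_succ (a q : ℂ) (n : ℕ) : qPoch a q (n+1) = qPoch a q n * (1 - a * q ^ n) := by
  simp [qPoch, Finset.prod_range_succ]

lemma qPoch_zero (a q : ℂ) : qPoch a q 0 = 1 := by simp [qPoch]

lemma qPoch_zero_left (q : ℂ) (n : ℕ) : qPoch 0 q n = 1 := by simp [qPoch]

lemma qPoch_add (a q : ℂ) (M n : ℕ) : qPoch a q (M+n) = qPoch a q M * qPoch (a * q ^ M) q n := by
  simp only [qPoch, Finset.prod_range_add]
  congr 1
  refine Finset.prod_congr rfl fun k _ => ?_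
  rw [pow_add]; ring

lemma qPoch_ne (a q : ℂ) (h : ∀ m : ℕ, a * q ^ m ≠ 1) (n : ℕ) : qPoch a q n ≠ 0 := by
  rw [qPoch, Finset.prod_ne_zero_iff]
  intro k _ h'
  exact h k (sub_eq_zero.mp h').symm

lemma small_ne (q x : ℂ) (hq : ‖q‖ < 1) (hx : ‖x‖ < 1) (m : ℕ) : x * q ^ m ≠ 1 := by
  intro h
  have h1 : ‖x * q ^ m‖ = 1 := by rw [h]; simp
  rw [norm_mul, norm_pow] at h1
  have : ‖q‖ ^ m ≤ 1 := pow_le_one₀ (norm_nonneg _) hq.le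
  nlinarith [norm_nonneg x]

lemma qPoch_summ (a q : ℂ) (hq : ‖q‖ < 1) : Summable (fun k : ℕ => ‖-(a * q ^ k)‖) := by
  simp only [norm_neg, norm_mul, norm_pow]
  exact (summable_geometric_of_lt_one (norm_nonneg _) hq).mul_left _

lemma qPoch_tendsto (a q : ℂ) (hq : ‖q‖ < 1) :
    Tendsto (fun n => qPoch a q n) atTop (𝓝 (qPochInf a q)) := by
  have := (multipliable_one_add_of_summable (qPoch_summ a q hq)).hasProd.tendsto_prod_nat
  simpa [qPoch, qPochInf, sub_eq_add_neg] using this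

lemma qPochInf_ne (a q : ℂ) (hq : ‖q‖ < 1) (h : ∀ m : ℕ, a * q ^ m ≠ 1) : qPochInf a q ≠ 0 := by
  have := tprod_one_add_ne_zero_of_summable (f := fun k : ℕ => -(a * q ^ k))
    (fun i h' => h i (by linear_combination -h')) (qPoch_summ a q hq)
  simpa [qPochInf, sub_eq_add_neg] using this

lemma qPoch_bound (q : ℂ) (hq : ‖q‖ < 1) (A : ℝ) :
    ∃ C : ℝ, 0 ≤ C ∧ ∀ x : ℂ, ‖x‖ ≤ A → ∀ n, ‖qPoch x q n‖ ≤ C := by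
  refine ⟨Real.exp (|A| * (1 - ‖q‖)⁻¹), (Real.exp_pos _).le, fun x hx n => ?_⟩
  have hs := summable_geometric_of_lt_one (norm_nonneg q) hq
  calc ‖qPoch x q n‖ ≤ ∏ k ∈ Finset.range n, ‖1 - x * q ^ k‖ := Finset.norm_prod_le _ _
    _ ≤ ∏ k ∈ Finset.range n, Real.exp (|A| * ‖q‖ ^ k) := by
        refine Finset.prod_le_prod (fun _ _ => norm_nonneg _) fun k _ => ?_
        calc ‖1 - x * q ^ k‖ ≤ ‖(1:ℂ)‖ + ‖x * q ^ k‖ := norm_sub_le _ _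
          _ = ‖x‖ * ‖q‖ ^ k + 1 := by rw [norm_mul, norm_pow, norm_one]; ring
          _ ≤ |A| * ‖q‖ ^ k + 1 := by
              gcongr; exact hx.trans (le_abs_self A)
          _ ≤ _ := Real.add_one_le_exp _
    _ = Real.exp (|A| * ∑ k ∈ Finset.range n, ‖q‖ ^ k) := by
        rw [← Real.exp_sum, Finset.mul_sum]
    _ ≤ _ := by
        gcongr
        rw [← tsum_geometric_of_lt_one (norm_nonneg q) hq]
        exact hs.sum_le_tsum _ (fun _ _ => by positivity)

lemma qPoch_inv_bound (a q : ℂ) (hq : ‖q‖ < 1) (h : ∀ m : ℕ, a * q ^ m ≠ 1) :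
    ∃ C : ℝ, 0 ≤ C ∧ ∀ M n, ‖(qPoch (a * q ^ M) q n)⁻¹‖ ≤ C := by
  have ht := ((qPoch_tendsto a q hq).inv₀ (qPochInf_ne a q hq h)).norm
  obtain ⟨C, hC⟩ := ht.bddAbove_range
  have hC' : ∀ n, ‖(qPoch a q n)⁻¹‖ ≤ C := fun n => hC ⟨n, rfl⟩
  obtain ⟨D, hD0, hD⟩ := qPoch_bound q hq ‖a‖
  have hC0 : 0 ≤ C := (norm_nonneg _).trans (hC' 0)
  refine ⟨D * C, by positivity, fun M n => ?_⟩
  have : (qPoch (a * q ^ M) q n)⁻¹ = qPoch a q M * (qPoch a q (M+n))⁻¹ := by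
    rw [qPoch_add]
    field_simp [qPoch_ne a q h M]
  rw [this, norm_mul]
  exact mul_le_mul (hD a le_rfl M) (hC' _) (norm_nonneg _) hD0

noncomputable def bdT (q b y a : ℂ) (n : ℕ) : ℂ :=
  qPoch a q n * qPoch b q n / (qPoch q q n * qPoch (a * y) q n) * (-y) ^ n

lemma bdT_bound (q b y a : ℂ) (hq : ‖q‖ < 1) (h : ∀ m : ℕ, a * y * q ^ m ≠ 1) :
    ∃ C : ℝ, 0 ≤ C ∧ ∀ M n, ‖bdT q b y (a * q ^ M) n‖ ≤ C * ‖y‖ ^ n := by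
  obtain ⟨A, hA0, hA⟩ := qPoch_bound q hq ‖a‖
  obtain ⟨B, hB0, hB⟩ := qPoch_bound q hq ‖b‖
  obtain ⟨D, hD0, hD⟩ := qPoch_inv_bound q q hq (small_ne q q hq hq)
  obtain ⟨E, hE0, hE⟩ := qPoch_inv_bound (a * y) q hq h
  refine ⟨A * B * (D * E), by positivity, fun M n => ?_⟩
  have h1 : ‖a * q ^ M‖ ≤ ‖a‖ := by
    rw [norm_mul, norm_pow]
    exact mul_le_of_le_one_right (norm_nonneg _) (pow_le_one₀ (norm_nonneg _) hq.le)
  have h2 := hD 0 n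
  have h3 := hE M n
  rw [pow_zero, mul_one] at h2
  rw [bdT, div_eq_mul_inv, mul_inv, norm_mul, norm_mul, norm_mul, norm_mul, norm_pow, norm_neg,
    show a * q ^ M * y = a * y * q ^ M by ring]
  gcongr
  · exact hA _ h1 n
  · exact hB _ le_rfl n

lemma geo_tendsto (y : ℂ) (hy : ‖y‖ < 1) (f : ℕ → ℂ) (C : ℝ) (h : ∀ n, ‖f n‖ ≤ C * ‖y‖ ^ n) :
    Tendsto f atTop (𝓝 0) := by
  refine squeeze_zero_norm h ?_
  simpa using (tendsto_pow_atTop_nhds_zero_of_lt_one (norm_nonneg y) hy).const_mul C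

lemma geo_summable (y : ℂ) (hy : ‖y‖ < 1) (f : ℕ → ℂ) (C : ℝ) (h : ∀ n, ‖f n‖ ≤ C * ‖y‖ ^ n) :
    Summable f :=
  Summable.of_norm_bounded ((summable_geometric_of_lt_one (norm_nonneg y) hy).mul_left C) h

lemma qPoch_shift (a q : ℂ) (n : ℕ) : qPoch a q (n+1) = (1 - a) * qPoch (a * q) q n := by
  rw [add_comm, qPoch_add]; simp [qPoch]

lemma bdT_finite (q b y a : ℂ) (hq : ‖q‖ < 1) (hby : b * y = q)
    (h : ∀ m : ℕ, a * y * q ^ m ≠ 1) (N : ℕ) :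
    ∑ n ∈ Finset.range (N+1), ((1 - a * y) * (1 - a * y * q) * bdT q b y a n -
      (1 - a * q) * (1 - a * y ^ 2) * bdT q b y (a * q ^ 2) n) =
    a * (1 - y) * qPoch (a * q) q N * qPoch b q (N+1) * (-y) ^ (N+1) /
      (qPoch q q N * qPoch (a * y * q ^ 2) q N) := by
  induction N with
  | zero =>
    simp [bdT, qPoch_zero, qPoch_succ]
    subst hby
    ring
  | succ N ih =>
    rw [Finset.sum_range_succ, ih]
    have hc : ∀ m : ℕ, 1 - a * y * q ^ m ≠ 0 := fun m h' => h m (by linear_combination -h')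
    have hqq := qPoch_ne q q (small_ne q q hq hq) N
    have hqN : 1 - q * q ^ N ≠ 0 := fun h' => small_ne q q hq hq N (by linear_combination -h')
    have hcc : qPoch (a * y * q ^ 2) q N ≠ 0 := qPoch_ne _ _ (fun m => by
      have := h (2 + m); rwa [pow_add, ← mul_assoc] at this) N
    have h0 := hc 0
    have h1 := hc 1
    have h2 := hc (N+1)
    have h3 := hc (N+2)
    have e1 : qPoch a q (N+1) = (1 - a) * qPoch (a * q) q N := qPoch_shift _ _ _
    have e2 : (1 - a * q) * qPoch (a * q ^ 2) q (N+1) = qPoch (a * q) q N *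
        ((1 - a * q ^ (N+1)) * (1 - a * q ^ (N+2))) := by
      have := qPoch_shift (a * q) q (N+1)
      rw [qPoch_succ, qPoch_succ] at this
      rw [show a * q ^ 2 = a * q * q by ring, ← this]; ring
    have e3 : qPoch (a * y) q (N+1) = (1 - a * y) * (1 - a * y * q) * qPoch (a * y * q ^ 2) q N
        / (1 - a * y * q ^ (N+1)) := by
      rw [eq_div_iff h2, ← qPoch_succ, qPoch_shift, qPoch_shift,
        show a * y * q * q = a * y * q ^ 2 by ring]; ring
    have e4 : qPoch (a * q ^ 2 * y) q (N+1) =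
        qPoch (a * y * q ^ 2) q N * (1 - a * y * q ^ (N+2)) := by
      rw [qPoch_succ, show a * q ^ 2 * y = a * y * q ^ 2 by ring]; ring
    have e5 : qPoch (a * y * q ^ 2) q (N+1) =
        qPoch (a * y * q ^ 2) q N * (1 - a * y * q ^ (N+2)) := by
      rw [qPoch_succ]; ring
    have e6 : (1 - a * q) * (1 - a * y ^ 2) * bdT q b y (a * q ^ 2) (N+1) =
       (1 - a * y ^ 2) * (qPoch (a * q) q N *
        ((1 - a * q ^ (N+1)) * (1 - a * q ^ (N+2)))) * qPoch b q (N+1) /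
        (qPoch q q N * (1 - q * q ^ N) * (qPoch (a * y * q ^ 2) q N * (1 - a * y * q ^ (N+2))))
        * (-y) ^ (N+1) := by
      rw [bdT, e4, ← e2, qPoch_succ q q N]; ring
    rw [e6, bdT, e1, e3, e5, qPoch_succ q q N, qPoch_succ b q (N+1), qPoch_succ (a*q) q N,
      pow_succ (-y) (N+1)]
    rw [pow_zero, mul_one] at h0
    rw [pow_one] at h1
    generalize qPoch b q (N+1) = Z
    generalize (-y) ^ (N+1) = W
    generalize qPoch q q N = U at *
    generalize qPoch (a * y * q ^ 2) q N = V at *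
    generalize qPoch (a * q) q N = X
    rw [pow_succ q (N+1), pow_succ q N] at *
    generalize q ^ N = Q at *
    clear ih e1 e2 e3 e4 e5 e6 hc h
    generalize hD3 : 1 - a * y * (Q * q * q) = D3 at *
    generalize hD2 : 1 - a * y * (Q * q) = D2 at *
    generalize hD1 : 1 - q * Q = D1 at *
    generalize hE0 : 1 - a * y = E0 at *
    generalize hE1 : 1 - a * y * q = E1 at *
    field_simp
    subst hD3 hD2 hD1 hE0 hE1
    subst hby
    ring

lemma bd_step (q b y a : ℂ) (hq : ‖q‖ < 1) (hy : ‖y‖ < 1) (hby : b * y = q)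
    (h : ∀ m : ℕ, a * y * q ^ m ≠ 1) :
    (1 - a * y) * (1 - a * y * q) * ∑' n, bdT q b y a n =
      (1 - a * q) * (1 - a * y ^ 2) * ∑' n, bdT q b y (a * q ^ 2) n := by
  obtain ⟨C, hC0, hC⟩ := bdT_bound q b y a hq h
  have s1 : Summable (bdT q b y a) := geo_summable y hy _ C (by simpa using hC 0)
  have s2 : Summable (bdT q b y (a * q ^ 2)) := geo_summable y hy _ C (hC 2)
  have hs := ((s1.hasSum.mul_left ((1 - a * y) * (1 - a * y * q))).sub
    (s2.hasSum.mul_left ((1 - a * q) * (1 - a * y ^ 2)))).tendsto_sum_nat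
  have hs' := hs.comp (tendsto_add_atTop_nat 1)
  have hz : Tendsto (fun N => a * (1 - y) * qPoch (a * q) q N * qPoch b q (N+1) * (-y) ^ (N+1) /
      (qPoch q q N * qPoch (a * y * q ^ 2) q N)) atTop (𝓝 0) := by
    have h2 : ∀ m : ℕ, a * y * q ^ 2 * q ^ m ≠ 1 := fun m => by
      have := h (2 + m); rwa [pow_add, ← mul_assoc] at this
    have t1 := qPoch_tendsto (a * q) q hq
    have t2 := (qPoch_tendsto b q hq).comp (tendsto_add_atTop_nat 1)
    have t3 := qPoch_tendsto q q hq
    have t4 := qPoch_tendsto (a * y * q ^ 2) q hq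
    have t5 : Tendsto (fun n : ℕ => (-y) ^ n) atTop (𝓝 0) :=
      tendsto_pow_atTop_nhds_zero_of_norm_lt_one (by simpa using hy)
    have t6 := t5.comp (tendsto_add_atTop_nat 1)
    have := (((t1.const_mul (a * (1 - y))).mul t2).mul t6).div (t3.mul t4)
      (mul_ne_zero (qPochInf_ne q q hq (small_ne q q hq hq)) (qPochInf_ne _ q hq h2))
    rw [mul_zero, zero_div] at this
    exact this
  have := tendsto_nhds_unique hs' (hz.congr fun N => (bdT_finite q b y a hq hby h N).symm)
  exact sub_eq_zero.mp this

lemma bd_iter (q b y a : ℂ) (hq : ‖q‖ < 1) (hy : ‖y‖ < 1) (hby : b * y = q)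
    (h : ∀ m : ℕ, a * y * q ^ m ≠ 1) (N : ℕ) :
    qPoch (a * y) q (2 * N) * ∑' n, bdT q b y a n =
      qPoch (a * q) (q ^ 2) N * qPoch (a * y ^ 2) (q ^ 2) N *
        ∑' n, bdT q b y (a * q ^ (2 * N)) n := by
  induction N with
  | zero => simp [qPoch_zero]
  | succ N ih =>
    have := bd_step q b y (a * q ^ (2 * N)) hq hy hby (fun m => by
      have := h (2 * N + m); rw [pow_add] at this; intro h'; exact this (by rw [← h']; ring))
    rw [show a * q ^ (2 * N) * q ^ 2 = a * q ^ (2 * (N+1)) by ring] at this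
    rw [show 2 * (N + 1) = 2 * N + 1 + 1 by ring, qPoch_succ, qPoch_succ, qPoch_succ, qPoch_succ,
      show 2 * N + 1 + 1 = 2 * (N + 1) by ring, ← pow_mul, pow_succ q (2 * N)]
    linear_combination (1 - a * y * q ^ (2 * N)) * (1 - a * y * (q ^ (2 * N) * q)) * ih +
      qPoch (a * q) (q ^ 2) N * qPoch (a * y ^ 2) (q ^ 2) N * this

lemma qPoch_cont (q : ℂ) (n : ℕ) : Continuous (fun x => qPoch x q n) := by
  unfold qPoch; fun_prop

lemma bd_lim (q b y a : ℂ) (hq : ‖q‖ < 1) (hy : ‖y‖ < 1)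
    (h : ∀ m : ℕ, a * y * q ^ m ≠ 1) :
    Tendsto (fun N : ℕ => ∑' n, bdT q b y (a * q ^ (2 * N)) n) atTop
      (𝓝 (∑' n, bdT q b y 0 n)) := by
  obtain ⟨C, hC0, hC⟩ := bdT_bound q b y a hq h
  refine tendsto_tsum_of_dominated_convergence (bound := fun n => C * ‖y‖ ^ n)
    ((summable_geometric_of_lt_one (norm_nonneg y) hy).mul_left C) (fun n => ?_)
    (Eventually.of_forall fun N n => hC _ n)
  have t0 : Tendsto (fun N : ℕ => a * q ^ (2 * N)) atTop (𝓝 0) := by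
    have h2 : ‖q ^ 2‖ < 1 := by
      rw [norm_pow]; exact pow_lt_one₀ (norm_nonneg _) hq two_ne_zero
    have := (tendsto_pow_atTop_nhds_zero_of_norm_lt_one h2).const_mul a
    simpa [pow_mul] using this
  have hc : ContinuousAt (fun x => bdT q b y x n) 0 := by
    unfold bdT
    have c1 := (qPoch_cont q n).continuousAt (x := 0)
    have c2 : Continuous (fun x => qPoch (x * y) q n) :=
      (qPoch_cont q n).comp (continuous_id.mul continuous_const)
    refine ((c1.mul continuousAt_const).div (continuousAt_const.mul c2.continuousAt) ?_).mul
      continuousAt_const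
    change qPoch q q n * qPoch (0 * y) q n ≠ 0
    rw [zero_mul, qPoch_zero_left, mul_one]
    exact qPoch_ne q q (small_ne q q hq hq) n
  exact hc.tendsto.comp t0

lemma bdU_bound (q b : ℂ) (hq : ‖q‖ < 1) :
    ∃ C : ℝ, 0 ≤ C ∧ ∀ n, ‖qPoch b q n / qPoch q q n‖ ≤ C := by
  obtain ⟨B, hB0, hB⟩ := qPoch_bound q hq ‖b‖
  obtain ⟨D, hD0, hD⟩ := qPoch_inv_bound q q hq (small_ne q q hq hq)
  refine ⟨B * D, by positivity, fun n => ?_⟩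
  have h2 := hD 0 n
  rw [pow_zero, mul_one] at h2
  rw [div_eq_mul_inv, norm_mul]
  gcongr
  exact hB _ le_rfl n

lemma qbin_finite (q b z : ℂ) (hq : ‖q‖ < 1) (N : ℕ) :
    ∑ n ∈ Finset.range N, ((1 - z) * (qPoch b q n / qPoch q q n * z ^ n) -
      (1 - b * z) * (qPoch b q n / qPoch q q n * (z * q) ^ n)) =
    -(qPoch b q N / qPoch q q N * (1 - q ^ N) * z ^ N) := by
  induction N with
  | zero => simp
  | succ N ih =>
    rw [Finset.sum_range_succ, ih, qPoch_succ, qPoch_succ]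
    have hqq := qPoch_ne q q (small_ne q q hq hq) N
    have hqN : 1 - q * q ^ N ≠ 0 := fun h' => small_ne q q hq hq N (by linear_combination -h')
    rw [mul_pow, pow_succ, pow_succ]
    clear ih
    generalize q ^ N = Q at *
    rw [mul_comm Q q]
    generalize hD1 : 1 - q * Q = D1 at *
    field_simp
    subst hD1
    ring

lemma qbin_bd (q b z : ℂ) (C : ℝ) (hC : ∀ n, ‖qPoch b q n / qPoch q q n‖ ≤ C) (n : ℕ) :
    ‖qPoch b q n / qPoch q q n * z ^ n‖ ≤ C * ‖z‖ ^ n := by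
  rw [norm_mul, norm_pow]; gcongr; exact hC n

lemma qbin_step (q b z : ℂ) (hq : ‖q‖ < 1) (hz : ‖z‖ < 1) :
    (1 - z) * ∑' n, (qPoch b q n / qPoch q q n * z ^ n) =
      (1 - b * z) * ∑' n, (qPoch b q n / qPoch q q n * (z * q) ^ n) := by
  obtain ⟨C, hC0, hC⟩ := bdU_bound q b hq
  have hzq : ‖z * q‖ < 1 := by
    rw [norm_mul]; nlinarith [norm_nonneg z, norm_nonneg q]
  have s1 := geo_summable z hz _ C (qbin_bd q b z C hC)
  have s2 := geo_summable (z * q) hzq _ C (qbin_bd q b (z * q) C hC)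
  have hs := ((s1.hasSum.mul_left (1 - z)).sub (s2.hasSum.mul_left (1 - b * z))).tendsto_sum_nat
  have hq0 := tendsto_pow_atTop_nhds_zero_of_norm_lt_one hq
  have hz0 := geo_tendsto z hz _ C (qbin_bd q b z C hC)
  have hl : Tendsto (fun N => -(qPoch b q N / qPoch q q N * (1 - q ^ N) * z ^ N)) atTop (𝓝 0) := by
    have := (hz0.mul (hq0.const_sub 1)).neg
    simp only [zero_mul, neg_zero] at this
    exact this.congr fun N => by ring
  exact sub_eq_zero.mp (tendsto_nhds_unique hs
    (hl.congr fun N => (qbin_finite q b z hq N).symm))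

lemma qbin (q b z : ℂ) (hq : ‖q‖ < 1) (hz : ‖z‖ < 1) :
    qPochInf z q * ∑' n, (qPoch b q n / qPoch q q n * z ^ n) = qPochInf (b * z) q := by
  obtain ⟨C, hC0, hC⟩ := bdU_bound q b hq
  have hle : ∀ N : ℕ, ‖z * q ^ N‖ ≤ ‖z‖ := fun N => by
    rw [norm_mul, norm_pow]
    exact mul_le_of_le_one_right (norm_nonneg _) (pow_le_one₀ (norm_nonneg _) hq.le)
  have it : ∀ N, qPoch z q N * ∑' n, (qPoch b q n / qPoch q q n * z ^ n) =
      qPoch (b * z) q N * ∑' n, (qPoch b q n / qPoch q q n * (z * q ^ N) ^ n) := by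
    intro N
    induction N with
    | zero => simp [qPoch_zero]
    | succ N ih =>
      have := qbin_step q b (z * q ^ N) hq ((hle N).trans_lt hz)
      rw [show z * q ^ N * q = z * q ^ (N+1) by ring] at this
      rw [qPoch_succ, qPoch_succ]
      linear_combination (1 - z * q ^ N) * ih + qPoch (b * z) q N * this
  have t0 : Tendsto (fun N : ℕ => z * q ^ N) atTop (𝓝 0) := by
    simpa using (tendsto_pow_atTop_nhds_zero_of_norm_lt_one hq).const_mul z
  have hl : Tendsto (fun N : ℕ => ∑' n, (qPoch b q n / qPoch q q n * (z * q ^ N) ^ n)) atTop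
      (𝓝 (∑' n, (qPoch b q n / qPoch q q n * 0 ^ n))) := by
    refine tendsto_tsum_of_dominated_convergence (bound := fun n => C * ‖z‖ ^ n)
      ((summable_geometric_of_lt_one (norm_nonneg z) hz).mul_left C) (fun n => ?_)
      (Eventually.of_forall fun N n => (qbin_bd q b _ C hC n).trans ?_)
    · exact (t0.pow n).const_mul _
    · gcongr; exact hle N
  have h0 : ∑' n, (qPoch b q n / qPoch q q n * 0 ^ n) = 1 := by
    rw [tsum_eq_single 0 (fun n hn => by simp [hn])]; simp [qPoch_zero]
  rw [h0] at hl
  have l1 := (qPoch_tendsto z q hq).mul_const (∑' n, (qPoch b q n / qPoch q q n * z ^ n))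
  have l2 := (qPoch_tendsto (b * z) q hq).mul hl
  rw [mul_one] at l2
  exact tendsto_nhds_unique l1 (l2.congr fun N => (it N).symm)

/-- The Bailey–Daum q-Kummer summation formula: for `|q| < 1`, `|q/b| < 1`, `b ≠ 0`,
with nonzero denominator factors,
`₂φ₁(a,b;aq/b;q,-q/b) = (-q;q)_∞ (aq;q²)_∞ (aq²/b²;q²)_∞ / ((aq/b;q)_∞ (-q/b;q)_∞)`. -/
theorem bailey_daum (q a b : ℂ) (hq : ‖q‖ < 1) (hqb : ‖q / b‖ < 1) (hb : b ≠ 0)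
    (hden : ∀ m : ℕ, a * q / b * q ^ m ≠ 1) :
    HasSum
      (fun n : ℕ =>
        qPoch a q n * qPoch b q n / (qPoch q q n * qPoch (a * q / b) q n) * (-(q / b)) ^ n)
      (qPochInf (-q) q * qPochInf (a * q) (q ^ 2) * qPochInf (a * q ^ 2 / b ^ 2) (q ^ 2) /
        (qPochInf (a * q / b) q * qPochInf (-(q / b)) q)) := by
  have hby : b * (q / b) = q := by field_simp
  rw [show a * q ^ 2 / b ^ 2 = a * (q / b) ^ 2 by ring]
  rw [show a * q / b = a * (q / b) by ring] at *
  generalize q / b = y at *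
  change HasSum (bdT q b y a) _
  have hy' : ‖-y‖ < 1 := by rwa [norm_neg]
  have h2 : ‖q ^ 2‖ < 1 := by
    rw [norm_pow]; exact pow_lt_one₀ (norm_nonneg _) hq two_ne_zero
  obtain ⟨C, hC0, hC⟩ := bdT_bound q b y a hq hden
  have s1 : Summable (bdT q b y a) := geo_summable y hqb _ C (by simpa using hC 0)
  have n1 := qPochInf_ne (a * y) q hq hden
  have n2 := qPochInf_ne (-y) q hq (small_ne q _ hq hy')
  have l1 := ((qPoch_tendsto (a * y) q hq).comp
    (tendsto_id.const_mul_atTop' (r := 2) two_pos)).mul_const (∑' n, bdT q b y a n)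
  have l2 := ((qPoch_tendsto (a * q) (q ^ 2) h2).mul
    (qPoch_tendsto (a * y ^ 2) (q ^ 2) h2)).mul (bd_lim q b y a hq hqb hden)
  have e := tendsto_nhds_unique l1
    (l2.congr fun N => (bd_iter q b y a hq hqb hby hden N).symm)
  have e0 : ∑' n, bdT q b y 0 n = ∑' n, (qPoch b q n / qPoch q q n * (-y) ^ n) := by
    simp [bdT, qPoch_zero_left]
  have e1 := qbin q b (-y) hq hy'
  rw [show b * -y = -q by rw [← hby]; ring] at e1
  rw [e0] at e
  have : ∑' n, bdT q b y a n = qPochInf (-q) q * qPochInf (a * q) (q ^ 2) *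
      qPochInf (a * y ^ 2) (q ^ 2) / (qPochInf (a * y) q * qPochInf (-y) q) := by
    rw [eq_div_iff (mul_ne_zero n1 n2)]
    linear_combination qPochInf (-y) q * e +
      qPochInf (a * q) (q ^ 2) * qPochInf (a * y ^ 2) (q ^ 2) * e1
  rw [← this]
  exact s1.hasSum
end
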